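/- For every level a ∈ {1,…,K} with m_a > 0 and every pair of sites i < j, the normalized weight f_a satisfies, for each fixed realization of the disorder, the derivative identity ∂_{J_{ij}} f_a = β√(t/N) m_a f_a ( ω̃_a(σ_i σ_j) − ω̃_{a−1}(σ_i σ_j) ), where ω̃_a are the partially averaged Gibbs states. -/

import Mathlib

open MeasureTheory ProbabilityTheory Filter

noncomputable section

/-! ## Gaussian disorder -/

/-- The standard (centered, unit variance) Gaussian measure on `ℝ`. -/
def stdGauss : Measure ℝ := gaussianReal 0 1

instance : IsProbabilityMeasure stdGauss := by unfold stdGauss; infer_instance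

/-- `N` i.i.d. standard Gaussian variables. -/
def gaussN (N : ℕ) : Measure (Fin N → ℝ) := Measure.pi fun _ => stdGauss

instance (N : ℕ) : IsProbabilityMeasure (gaussN N) := by unfold gaussN; infer_instance

/-- The i.i.d. standard Gaussian couplings `J_{ij}` (only entries with `i < j` are used). -/
def gaussC (N : ℕ) : Measure (Fin N → Fin N → ℝ) := Measure.pi fun _ => gaussN N

instance (N : ℕ) : IsProbabilityMeasure (gaussC N) := by unfold gaussC; infer_instance

/-- The i.i.d. standard Gaussian one-body fields `J_i^a`, `a = 1, …, K`
(row `⟨a-1⟩ : Fin K` corresponds to the level `a` of the paper). -/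
def gaussS (K N : ℕ) : Measure (Fin K → Fin N → ℝ) := Measure.pi fun _ => gaussN N

instance (K N : ℕ) : IsProbabilityMeasure (gaussS K N) := by unfold gaussS; infer_instance

/-- I.i.d. standard Gaussian couplings indexed by subsets of sites, for the p-spin model
(only the cardinality-`p` subsets are used). -/
def gaussP (N : ℕ) : Measure (Finset (Fin N) → ℝ) := Measure.pi fun _ => stdGauss

instance (N : ℕ) : IsProbabilityMeasure (gaussP N) := by unfold gaussP; infer_instance

/-! ## Spins and overlaps -/

/-- The spin value (`±1`) of a Boolean configuration entry. -/
def spin (b : Bool) : ℝ := if b then 1 else -1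

/-- The overlap `q₁₂ = N⁻¹ ∑ᵢ σᵢ⁽¹⁾ σᵢ⁽²⁾` of two replicas. -/
def overlap (N : ℕ) (σ τ : Fin N → Bool) : ℝ := (N : ℝ)⁻¹ * ∑ i, spin (σ i) * spin (τ i)

/-! ## Piecewise constant functional order parameters and the Parisi function -/

/-- One backward step of the Parisi recursion on an interval of constancy of the
functional order parameter: from `g = f(q_a, ·)`, with value `m` of the order parameter
and `s = q_a - q`, produce `f(q, ·)`. -/
def pStep (m s : ℝ) (g : ℝ → ℝ) (y : ℝ) : ℝ :=
  if m = 0 then ∫ z, g (y + z * Real.sqrt s) ∂stdGauss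
  else m⁻¹ * Real.log (∫ z, Real.exp (m * g (y + z * Real.sqrt s)) ∂stdGauss)

/-- `parisiLevel K q m β j` is the Parisi function `f(q_{K-j}, ·; x, β)` at the node
`q_{K-j}`, obtained by `j` backward steps from the final condition `f(q_K, y) = log cosh (β y)`. -/
def parisiLevel (K : ℕ) (q m : ℕ → ℝ) (β : ℝ) : ℕ → ℝ → ℝ
  | 0 => fun y => Real.log (Real.cosh (β * y))
  | j + 1 => pStep (m (K - j)) (q (K - j) - q (K - j - 1)) (parisiLevel K q m β j)

/-- The Parisi function `f(r, y; x, β)` for a piecewise constant order parameter `x`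
given by nodes `q` and values `m`:  for `q_{a-1} ≤ r ≤ q_a` it is obtained from
`f(q_a, ·)` by one backward step with value `m_a` over a time `q_a - r`. -/
def parisiF (K : ℕ) (q m : ℕ → ℝ) (β : ℝ) (r y : ℝ) : ℝ :=
  pStep (m (sInf {a : ℕ | r ≤ q a})) (q (sInf {a : ℕ | r ≤ q a}) - r)
    (parisiLevel K q m β (K - sInf {a : ℕ | r ≤ q a})) y

/-- The functional order parameter as a function: `x(r) = m_a` for `q_{a-1} ≤ r < q_a`,
and `x(1) = m_K`. -/
def xFun (K : ℕ) (q m : ℕ → ℝ) (r : ℝ) : ℝ :=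
  if 1 ≤ r then m K else m (sInf {a : ℕ | r < q a})

/-- A piecewise constant functional order parameter:
`0 = q_0 ≤ q_1 ≤ … ≤ q_K = 1`, `0 ≤ m_1 ≤ … ≤ m_K ≤ 1`,
with the conventions `m_0 = 0`, `m_{K+1} = 1`. -/
structure OrderParam where
  K : ℕ
  hK : 1 ≤ K
  q : ℕ → ℝ
  m : ℕ → ℝ
  hq0 : q 0 = 0
  hqK : q K = 1
  hq_mono : ∀ a, a < K → q a ≤ q (a + 1)
  hm0 : m 0 = 0
  hmtop : m (K + 1) = 1
  hm1 : 0 ≤ m 1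
  hm_mono : ∀ a, 1 ≤ a → a < K → m a ≤ m (a + 1)
  hmK : m K ≤ 1

/-- Guerra's trial function `ᾱ(β, h; x) = log 2 + f(0, h; x, β) - (β²/2) ∫₀¹ r x(r) dr`. -/
def trialAlpha (K : ℕ) (q m : ℕ → ℝ) (β h : ℝ) : ℝ :=
  Real.log 2 + parisiLevel K q m β K h - β ^ 2 / 2 * ∫ r in (0 : ℝ)..1, r * xFun K q m r

/-! ## The Sherrington–Kirkpatrick model -/

/-- The SK Hamiltonian `H_N(σ, h, J) = -(1/√N) ∑_{i<j} J_{ij} σ_i σ_j - h ∑_i σ_i`. -/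
def hamSK (N : ℕ) (h : ℝ) (Jc : Fin N → Fin N → ℝ) (σ : Fin N → Bool) : ℝ :=
  -(1 / Real.sqrt N) * ∑ i, ∑ j, (if i < j then Jc i j * spin (σ i) * spin (σ j) else 0)
    - h * ∑ i, spin (σ i)

/-- The SK partition function `Z_N(β, h, J)`. -/
def ZSK (N : ℕ) (β h : ℝ) (Jc : Fin N → Fin N → ℝ) : ℝ :=
  ∑ σ : Fin N → Bool, Real.exp (-(β * hamSK N h Jc σ))

/-- The quenched average `N⁻¹ E log Z_N(β, h, J)`. -/
def quenchedFE (N : ℕ) (β h : ℝ) : ℝ :=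
  (N : ℝ)⁻¹ * ∫ Jc, Real.log (ZSK N β h Jc) ∂gaussC N

/-- The ground state energy density `e_N(J, h)`, defined by
`-e_N(J, h) = N⁻¹ min_σ H_N(σ, h, J)`. -/
def eGS (N : ℕ) (h : ℝ) (Jc : Fin N → Fin N → ℝ) : ℝ :=
  -((N : ℝ)⁻¹ * ⨅ σ : Fin N → Bool, hamSK N h Jc σ)

/-- The quenched ground state energy density `e_N(h) = E(e_N(J, h))`. -/
def eQuenched (N : ℕ) (h : ℝ) : ℝ := ∫ Jc, eGS N h Jc ∂gaussC N

/-! ## The interpolating system -/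

/-- The interpolating Boltzmann factor. -/
def bFac (N K : ℕ) (β h t : ℝ) (q : ℕ → ℝ) (Jc : Fin N → Fin N → ℝ)
    (Js : Fin K → Fin N → ℝ) (σ : Fin N → Bool) : ℝ :=
  Real.exp (β * Real.sqrt (t / N) *
        ∑ i, ∑ j, (if i < j then Jc i j * spin (σ i) * spin (σ j) else 0)
      + β * h * ∑ i, spin (σ i)
      + β * Real.sqrt (1 - t) *
          ∑ a : Fin K, Real.sqrt (q (a.val + 1) - q a.val) * ∑ i, Js a i * spin (σ i))

/-- The interpolating partition function `Z̃_N(β, h; t; x; J)`. -/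
def Ztil (N K : ℕ) (β h t : ℝ) (q : ℕ → ℝ) (Jc : Fin N → Fin N → ℝ)
    (Js : Fin K → Fin N → ℝ) : ℝ :=
  ∑ σ : Fin N → Bool, bFac N K β h t q Jc Js σ

/-- `Wrec … j` is the random variable `Z_{K-j}`:  `Z_K = Z̃_N` and
`Z_{a-1} = (E_a (Z_a^{m_a}))^{1/m_a}`, where `E_a` integrates the Gaussian row `J^a`. -/
def Wrec (N K : ℕ) (β h t : ℝ) (q m : ℕ → ℝ) :
    ℕ → (Fin N → Fin N → ℝ) → (Fin K → Fin N → ℝ) → ℝ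
  | 0 => Ztil N K β h t q
  | j + 1 => fun Jc Js =>
      if hj : j < K then
        (∫ g : Fin N → ℝ,
            (Wrec N K β h t q m j Jc (Function.update Js ⟨K - 1 - j, by omega⟩ g)) ^ m (K - j)
          ∂gaussN N) ^ (m (K - j))⁻¹
      else Wrec N K β h t q m j Jc Js

/-- `Zrec … a` is the random variable `Z_a` of the broken replica interpolation. -/
def Zrec (N K : ℕ) (β h t : ℝ) (q m : ℕ → ℝ) (a : ℕ) :
    (Fin N → Fin N → ℝ) → (Fin K → Fin N → ℝ) → ℝ :=
  Wrec N K β h t q m (K - a)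

/-- The interpolating auxiliary function `α̃_N(t) = N⁻¹ E₀ log Z₀`. -/
def atilde (N K : ℕ) (β h : ℝ) (q m : ℕ → ℝ) (t : ℝ) : ℝ :=
  (N : ℝ)⁻¹ * ∫ Jc, Real.log (Wrec N K β h t q m K Jc 0) ∂gaussC N

/-- The normalized weight `f_a = Z_a^{m_a} / E_a(Z_a^{m_a}) = Z_a^{m_a} / Z_{a-1}^{m_a}`. -/
def fWeight (N K : ℕ) (β h t : ℝ) (q m : ℕ → ℝ) (a : ℕ) (Jc : Fin N → Fin N → ℝ)
    (Js : Fin K → Fin N → ℝ) : ℝ :=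
  Zrec N K β h t q m a Jc Js ^ m a / Zrec N K β h t q m (a - 1) Jc Js ^ m a

/-- The Gibbs expectation `ω(A)` of the interpolating Boltzmann factor. -/
def gibbs (N K : ℕ) (β h t : ℝ) (q : ℕ → ℝ) (A : (Fin N → Bool) → ℝ)
    (Jc : Fin N → Fin N → ℝ) (Js : Fin K → Fin N → ℝ) : ℝ :=
  (∑ σ : Fin N → Bool, A σ * bFac N K β h t q Jc Js σ) / Ztil N K β h t q Jc Js

/-- The two-replica Gibbs product expectation `Ω(A)`. -/
def gibbs2 (N K : ℕ) (β h t : ℝ) (q : ℕ → ℝ) (A : (Fin N → Bool) → (Fin N → Bool) → ℝ)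
    (Jc : Fin N → Fin N → ℝ) (Js : Fin K → Fin N → ℝ) : ℝ :=
  (∑ σ : Fin N → Bool, ∑ τ : Fin N → Bool,
      A σ τ * bFac N K β h t q Jc Js σ * bFac N K β h t q Jc Js τ) /
    Ztil N K β h t q Jc Js ^ 2

/-- `omT1 … A j` is the partially averaged state `ω̃_{K-j}(A)`:
`ω̃_K = ω` and `ω̃_{a-1}(·) = E_a (f_a ω̃_a(·))`. -/
def omT1 (N K : ℕ) (β h t : ℝ) (q m : ℕ → ℝ) (A : (Fin N → Bool) → ℝ) :
    ℕ → (Fin N → Fin N → ℝ) → (Fin K → Fin N → ℝ) → ℝ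
  | 0 => gibbs N K β h t q A
  | j + 1 => fun Jc Js =>
      if hj : j < K then
        ∫ g : Fin N → ℝ,
          fWeight N K β h t q m (K - j) Jc (Function.update Js ⟨K - 1 - j, by omega⟩ g) *
            omT1 N K β h t q m A j Jc (Function.update Js ⟨K - 1 - j, by omega⟩ g)
          ∂gaussN N
      else omT1 N K β h t q m A j Jc Js

/-- `omT2 … A j` is the partially averaged two-replica state `Ω̃_{K-j}(A)`:
`Ω̃_K = Ω` and `Ω̃_{a-1}(·) = E_a (f_a Ω̃_a(·))`. -/
def omT2 (N K : ℕ) (β h t : ℝ) (q m : ℕ → ℝ) (A : (Fin N → Bool) → (Fin N → Bool) → ℝ) :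
    ℕ → (Fin N → Fin N → ℝ) → (Fin K → Fin N → ℝ) → ℝ
  | 0 => gibbs2 N K β h t q A
  | j + 1 => fun Jc Js =>
      if hj : j < K then
        ∫ g : Fin N → ℝ,
          fWeight N K β h t q m (K - j) Jc (Function.update Js ⟨K - 1 - j, by omega⟩ g) *
            omT2 N K β h t q m A j Jc (Function.update Js ⟨K - 1 - j, by omega⟩ g)
          ∂gaussN N
      else omT2 N K β h t q m A j Jc Js

/-- The deformed quenched average `⟨A⟩_a = E(f_1 ⋯ f_a Ω̃_a(A))` at interpolation
parameter `t`, for a function `A` of two replicas. -/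
def angA (N K : ℕ) (β h t : ℝ) (q m : ℕ → ℝ) (a : ℕ)
    (A : (Fin N → Bool) → (Fin N → Bool) → ℝ) : ℝ :=
  ∫ Jc, ∫ Js,
      (∏ b ∈ Finset.Icc 1 a, fWeight N K β h t q m b Jc Js) *
        omT2 N K β h t q m A (K - a) Jc Js
    ∂gaussS K N ∂gaussC N

/-! ## Zero temperature (ground state) objects -/

/-- The zero-temperature Parisi recursion: `parisiLevelBar K q m j` is `f̄(q_{K-j}, ·; x̄)`,
with final condition `f̄(q_K, y) = |y|`. -/
def parisiLevelBar (K : ℕ) (q m : ℕ → ℝ) : ℕ → ℝ → ℝ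
  | 0 => fun y => |y|
  | j + 1 => pStep (m (K - j)) (q (K - j) - q (K - j - 1)) (parisiLevelBar K q m j)

/-- A zero-temperature piecewise constant order parameter: nodes
`0 = q_0 ≤ … ≤ q_K = 1` and nondecreasing values `0 ≤ m̄_1 ≤ … ≤ m̄_K`
(no upper bound `1`), with the convention `m̄_0 = 0`. -/
structure ZeroTParam where
  K : ℕ
  hK : 1 ≤ K
  q : ℕ → ℝ
  m : ℕ → ℝ
  hq0 : q 0 = 0
  hqK : q K = 1
  hq_mono : ∀ a, a < K → q a ≤ q (a + 1)
  hm0 : m 0 = 0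
  hm1 : 0 ≤ m 1
  hm_mono : ∀ a, 1 ≤ a → a < K → m a ≤ m (a + 1)

/-- The zero-temperature trial function `α̃(h; x̄) = f̄(0, h; x̄) - (1/2) ∫₀¹ r x̄(r) dr`. -/
def gsTrial (K : ℕ) (q m : ℕ → ℝ) (h : ℝ) : ℝ :=
  parisiLevelBar K q m K h - 1 / 2 * ∫ r in (0 : ℝ)..1, r * xFun K q m r

/-! ## The p-spin model -/

/-- A piecewise constant functional order parameter on `[0, p/2]`:
`0 = q_0 ≤ … ≤ q_K = p/2` and `0 ≤ m_1 ≤ … ≤ m_K ≤ 1`. -/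
structure POrderParam (p : ℕ) where
  K : ℕ
  hK : 1 ≤ K
  q : ℕ → ℝ
  m : ℕ → ℝ
  hq0 : q 0 = 0
  hqK : q K = p / 2
  hq_mono : ∀ a, a < K → q a ≤ q (a + 1)
  hm1 : 0 ≤ m 1
  hm_mono : ∀ a, 1 ≤ a → a < K → m a ≤ m (a + 1)
  hmK : m K ≤ 1

/-- The p-spin Hamiltonian
`H_N(σ,h,J) = -(p!/(2N^{p-1}))^{1/2} ∑_{i_1<…<i_p} J_{i_1…i_p} σ_{i_1}⋯σ_{i_p} - h ∑_i σ_i`. -/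
def hamP (p N : ℕ) (h : ℝ) (J : Finset (Fin N) → ℝ) (σ : Fin N → Bool) : ℝ :=
  -Real.sqrt ((Nat.factorial p : ℝ) / (2 * (N : ℝ) ^ (p - 1))) *
      ∑ S ∈ Finset.powersetCard p (Finset.univ : Finset (Fin N)), J S * ∏ i ∈ S, spin (σ i)
    - h * ∑ i, spin (σ i)

/-- The p-spin partition function. -/
def ZP (p N : ℕ) (β h : ℝ) (J : Finset (Fin N) → ℝ) : ℝ :=
  ∑ σ : Fin N → Bool, Real.exp (-(β * hamP p N h J σ))

/-- The p-spin quenched average `N⁻¹ E log Z_N^{(p)}(β, h, J)`. -/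
def quenchedFEP (p N : ℕ) (β h : ℝ) : ℝ :=
  (N : ℝ)⁻¹ * ∫ J, Real.log (ZP p N β h J) ∂gaussP N

/-- The functional order parameter on `[0, p/2]` as a function. -/
def xFunP (p K : ℕ) (q m : ℕ → ℝ) (r : ℝ) : ℝ :=
  if (p : ℝ) / 2 ≤ r then m K else m (sInf {a : ℕ | r < q a})

/-- The change of variables `q̄(r)` defined by `2r = p q̄^{p-1}`. -/
def qBar (p : ℕ) (r : ℝ) : ℝ := (2 * r / p) ^ (((p : ℝ) - 1)⁻¹)

/-- The p-spin trial function
`ᾱ_p(β, h; x) = log 2 + f(0, h; x, β) - (β²/2) ∫₀^{p/2} q̄(r) x(r) dr`. -/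
def trialAlphaP (p K : ℕ) (q m : ℕ → ℝ) (β h : ℝ) : ℝ :=
  Real.log 2 + parisiLevel K q m β K h
    - β ^ 2 / 2 * ∫ r in (0 : ℝ)..((p : ℝ) / 2), qBar p r * xFunP p K q m r

/-! Along a curve of couplings on which `log B(σ)` has derivative `c A(σ)`, induction on the level
gives `∂ log Z_a = c ω̃_a(A)`: differentiating `log Z_{a-1} = m_a⁻¹ log E_a exp (m_a log Z_a)` under
the integral produces the mean of `∂ log Z_a` under `E_a` tilted by `Z_a^{m_a}`, and the density of
this tilted measure is `f_a`. Since `f_a = exp (m_a (log Z_a - log Z_{a-1}))`, the identity for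
`f_a` follows.

The integrability needed on the way comes from one property stable under all operations of the
recursion: the logarithm of `Z_a` is a Lipschitz function of the Gaussian fields. -/

/-- Positive functions whose logarithm is Lipschitz, with an unspecified constant. -/
def LogLipschitz {E : Type*} [PseudoMetricSpace E] (W : E → ℝ) : Prop :=
  (∀ x, 0 < W x) ∧ ∃ L : NNReal, LipschitzWith L fun x => Real.log (W x)

namespace LogLipschitz

section PseudoMetricSpace

variable {E F : Type*} [PseudoMetricSpace E] [PseudoMetricSpace F] {W : E → ℝ}

theorem exists_le_exp_mul (hW : LogLipschitz W) :
    ∃ L : NNReal, ∀ x y, W x ≤ Real.exp (L * dist x y) * W y := by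
  obtain ⟨hpos, L, hL⟩ := hW
  refine ⟨L, fun x y => ?_⟩
  rw [← Real.log_le_log_iff (hpos x) (mul_pos (Real.exp_pos _) (hpos y)),
    Real.log_mul (Real.exp_ne_zero _) (hpos y).ne', Real.log_exp]
  linarith [(abs_le.1 (hL.dist_le_mul x y)).2]

theorem of_le_exp_mul {L : NNReal} (hpos : ∀ x, 0 < W x)
    (h : ∀ x y, W x ≤ Real.exp (L * dist x y) * W y) : LogLipschitz W := by
  refine ⟨hpos, L, LipschitzWith.of_le_add_mul L fun x y => ?_⟩
  have hlog := Real.log_le_log (hpos x) (h x y)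
  rw [Real.log_mul (Real.exp_ne_zero _) (hpos y).ne', Real.log_exp] at hlog
  linarith

theorem exp {φ : E → ℝ} {L : NNReal} (hφ : LipschitzWith L φ) :
    LogLipschitz fun x => Real.exp (φ x) :=
  ⟨fun _ => Real.exp_pos _, L, by simpa only [Real.log_exp] using hφ⟩

theorem continuous_log (hW : LogLipschitz W) : Continuous fun x => Real.log (W x) :=
  let ⟨_, hL⟩ := hW.2
  hL.continuous

theorem continuous (hW : LogLipschitz W) : Continuous W := by
  simpa only [Function.comp_def, Real.exp_log (hW.1 _)] using
    Real.continuous_exp.comp hW.continuous_log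

theorem comp {f : F → E} {L : NNReal} (hW : LogLipschitz W) (hf : LipschitzWith L f) :
    LogLipschitz fun x => W (f x) := by
  obtain ⟨hpos, M, hM⟩ := hW
  exact ⟨fun x => hpos (f x), M * L, hM.comp hf⟩

theorem rpow (hW : LogLipschitz W) (p : ℝ) : LogLipschitz fun x => W x ^ p := by
  obtain ⟨hpos, L, hL⟩ := hW
  refine ⟨fun x => Real.rpow_pos_of_pos (hpos x) p, ‖p‖₊ * L, ?_⟩
  simpa only [Real.log_rpow (hpos _), Function.comp_def, smul_eq_mul] using
    (lipschitzWith_smul p).comp hL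

theorem sum {ι : Type*} {s : Finset ι} {W : ι → E → ℝ} (hs : s.Nonempty)
    (hW : ∀ i, LogLipschitz (W i)) : LogLipschitz fun x => ∑ i ∈ s, W i x := by
  choose L hL using fun i => (hW i).exists_le_exp_mul
  refine of_le_exp_mul (L := ∑ i ∈ s, L i)
    (fun x => Finset.sum_pos (fun i _ => (hW i).1 x) hs) fun x y => ?_
  rw [Finset.mul_sum]
  refine Finset.sum_le_sum fun i hi => (hL i x y).trans ?_
  have hLi : L i ≤ ∑ j ∈ s, L j := Finset.single_le_sum (fun _ _ => zero_le) hi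
  have := ((hW i).1 y).le
  gcongr

end PseudoMetricSpace

section Integral

variable {E F : Type*} [PseudoMetricSpace E] [NormedAddCommGroup F] [MeasurableSpace F]
  [OpensMeasurableSpace F] {μ : Measure F}

theorem integrable {W : F → ℝ} (hW : LogLipschitz W)
    (hμ : ∀ r : ℝ, Integrable (fun y => Real.exp (r * ‖y‖)) μ) : Integrable W μ := by
  obtain ⟨L, hL⟩ := hW.exists_le_exp_mul
  refine ((hμ L).mul_const (W 0)).mono' hW.continuous.aestronglyMeasurable (.of_forall fun y => ?_)
  rw [Real.norm_of_nonneg (hW.1 y).le]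
  simpa only [dist_zero_right] using hL y 0

theorem integral [NeZero μ] {W : E → F → ℝ} (hW : LogLipschitz fun z : E × F => W z.1 z.2)
    (hμ : ∀ r : ℝ, Integrable (fun y => Real.exp (r * ‖y‖)) μ) :
    LogLipschitz fun x => ∫ y, W x y ∂μ := by
  have hint (x : E) : Integrable (W x) μ :=
    (hW.comp (LipschitzWith.prodMk_left x)).integrable hμ
  obtain ⟨L, hL⟩ := hW.exists_le_exp_mul
  refine of_le_exp_mul (L := L) (fun x => ?_) fun x x' => ?_
  · have hexp : W x = fun y => Real.exp (Real.log (W x y)) :=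
      funext fun y => (Real.exp_log (hW.1 (x, y))).symm
    have hint_exp := hint x
    rw [hexp] at hint_exp ⊢
    exact integral_exp_pos hint_exp
  · rw [← integral_const_mul]
    refine integral_mono (hint x) ((hint x').const_mul _) fun y => ?_
    simpa [Prod.dist_eq] using hL (x, y) (x', y)

end Integral

end LogLipschitz

section Cgf

variable {Ω : Type*} [MeasurableSpace Ω] {μ : Measure Ω}

theorem aestronglyMeasurable_of_hasDerivAt {φ : ℝ → Ω → ℝ} {ψ : Ω → ℝ} {u : ℝ}
    (hmeas : ∀ v, AEStronglyMeasurable (φ v) μ)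
    (hderiv : ∀ x, HasDerivAt (fun v => φ v x) (ψ x) u) : AEStronglyMeasurable ψ μ :=
  aestronglyMeasurable_of_tendsto_ae (nhdsWithin 0 {0}ᶜ)
    (fun s => ((hmeas (u + s)).sub (hmeas u)).const_smul s⁻¹)
    (.of_forall fun x => hasDerivAt_iff_tendsto_slope_zero.1 (hderiv x))

theorem exp_mul_le_of_abs_deriv_le {f f' : ℝ → ℝ} {L u v : ℝ} (p : ℝ)
    (hderiv : ∀ w, HasDerivAt f (f' w) w) (hbound : ∀ w, |f' w| ≤ L) :
    Real.exp (p * f v) ≤ Real.exp (|p| * (L * |v - u|)) * Real.exp (p * f u) := by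
  have hlip : |f v - f u| ≤ L * |v - u| :=
    convex_univ.norm_image_sub_le_of_norm_hasDerivWithin_le
      (fun w _ => (hderiv w).hasDerivWithinAt) (fun w _ => hbound w) trivial trivial
  have hmul : p * (f v - f u) ≤ |p| * (L * |v - u|) :=
    (le_abs_self _).trans ((abs_mul _ _).trans_le (by gcongr))
  rw [← Real.exp_add, Real.exp_le_exp]
  linarith

theorem hasDerivAt_cgf_of_abs_deriv_le [NeZero μ] {φ φ' : ℝ → Ω → ℝ} {p L u : ℝ}
    (hmeas : ∀ v, AEStronglyMeasurable (φ v) μ)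
    (hint : Integrable (fun x => Real.exp (p * φ u x)) μ)
    (hderiv : ∀ v x, HasDerivAt (fun w => φ w x) (φ' v x) v)
    (hbound : ∀ v x, |φ' v x| ≤ L) :
    HasDerivAt (fun v => cgf (φ v) μ p)
      (p * ∫ x, φ' u x ∂μ.tilted fun x => p * φ u x) u := by
  have hdom (x : Ω) : ∀ v ∈ Metric.ball u 1, ‖Real.exp (p * φ v x) * (p * φ' v x)‖ ≤
      Real.exp (|p| * L) * Real.exp (p * φ u x) * (|p| * L) := by
    intro v hv
    have hL : 0 ≤ L := (abs_nonneg _).trans (hbound v x)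
    have hvu : L * |v - u| ≤ L := mul_le_of_le_one_right hL (Metric.mem_ball.1 hv).le
    rw [norm_mul, norm_mul, Real.norm_of_nonneg (Real.exp_pos _).le, Real.norm_eq_abs,
      Real.norm_eq_abs]
    have hexp := exp_mul_le_of_abs_deriv_le (u := u) (v := v) p
      (fun w => hderiv w x) (fun w => hbound w x)
    gcongr
    · exact hexp.trans (by gcongr)
    · exact hbound v x
  have hmgf := (hasDerivAt_integral_of_dominated_loc_of_deriv_le (μ := μ)
    (F := fun v x => Real.exp (p * φ v x)) (Metric.ball_mem_nhds u one_pos)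
    (.of_forall fun v => Real.continuous_exp.comp_aestronglyMeasurable ((hmeas v).const_mul p))
    hint
    (hint.aestronglyMeasurable.mul
      ((aestronglyMeasurable_of_hasDerivAt hmeas (hderiv u)).const_mul p))
    (.of_forall hdom) ((hint.const_mul _).mul_const _)
    (.of_forall fun x v _ => ((hderiv v x).const_mul p).exp)).2
  refine (hmgf.log (integral_exp_pos hint).ne').congr_deriv ?_
  rw [integral_tilted, ← integral_const_mul, ← integral_div]
  refine integral_congr_ae (.of_forall fun x => ?_)
  simp only [smul_eq_mul]
  ring

theorem abs_integral_tilted_le [NeZero μ] {f A : Ω → ℝ} {C : ℝ}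
    (hf : Integrable (fun x => Real.exp (f x)) μ) (hA : ∀ x, |A x| ≤ C) :
    |∫ x, A x ∂μ.tilted f| ≤ C := by
  have := isProbabilityMeasure_tilted hf
  simpa using norm_integral_le_of_norm_le_const (μ := μ.tilted f) (f := A) (.of_forall hA)

end Cgf

theorem integrable_exp_mul_norm_pi {ι : Type*} [Fintype ι] {E : ι → Type*}
    [∀ i, NormedAddCommGroup (E i)] [∀ i, MeasurableSpace (E i)] [∀ i, OpensMeasurableSpace (E i)]
    [∀ i, SecondCountableTopology (E i)]
    {μ : ∀ i, Measure (E i)} [∀ i, SigmaFinite (μ i)]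
    (hμ : ∀ i, ∀ r : ℝ, Integrable (fun x => Real.exp (r * ‖x‖)) (μ i)) (r : ℝ) :
    Integrable (fun x : ∀ i, E i => Real.exp (r * ‖x‖)) (Measure.pi μ) := by
  refine (Integrable.fintype_prod_dep fun i => hμ i |r|).mono'
    (by fun_prop) (.of_forall fun x => ?_)
  have hnorm : ‖x‖ ≤ ∑ i, ‖x i‖ :=
    (pi_norm_le_iff_of_nonneg (Finset.sum_nonneg fun _ _ => norm_nonneg _)).2 fun i =>
      Finset.single_le_sum (f := fun i => ‖x i‖) (fun _ _ => norm_nonneg _) (Finset.mem_univ i)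
  rw [Real.norm_of_nonneg (Real.exp_pos _).le, ← Real.exp_sum, ← Finset.mul_sum, Real.exp_le_exp]
  calc r * ‖x‖ ≤ |r| * ‖x‖ := by gcongr; exact le_abs_self r
    _ ≤ |r| * ∑ i, ‖x i‖ := by gcongr

theorem integrable_exp_mul_norm_gaussN (N : ℕ) (r : ℝ) :
    Integrable (fun g => Real.exp (r * ‖g‖)) (gaussN N) :=
  integrable_exp_mul_norm_pi (fun _ r => integrable_exp_mul_abs (X := fun x => x)
    (integrable_exp_mul_gaussianReal r) (integrable_exp_mul_gaussianReal (-r))) r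

theorem lipschitzWith_update {ι E : Type*} [Fintype ι] [DecidableEq ι] [PseudoMetricSpace E]
    (i : ι) : LipschitzWith 1 fun z : (ι → E) × E => Function.update z.1 i z.2 := by
  refine LipschitzWith.mk_one fun z w => (dist_pi_le_iff dist_nonneg).2 fun j => ?_
  obtain rfl | hj := eq_or_ne j i
  · simp [Prod.dist_eq]
  · simpa [hj, Prod.dist_eq] using Or.inl (dist_le_pi_dist z.1 w.1 j)

section Coupling

variable {N K : ℕ} {β h t : ℝ} {q : ℕ → ℝ}

theorem logLipschitz_bFac (Jc : Fin N → Fin N → ℝ) (σ : Fin N → Bool) :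
    LogLipschitz fun Js : Fin K → Fin N → ℝ => bFac N K β h t q Jc Js σ := by
  have hlin : IsLinearMap ℝ fun Js : Fin K → Fin N → ℝ => β * Real.sqrt (1 - t) *
      ∑ a : Fin K, Real.sqrt (q (a.val + 1) - q a.val) * ∑ i, Js a i * spin (σ i) := by
    constructor
    · intro Js Js'
      simp only [Pi.add_apply, add_mul, mul_add, Finset.sum_add_distrib]
    · intro r Js
      simp only [Pi.smul_apply, smul_eq_mul, Finset.mul_sum]
      refine Finset.sum_congr rfl fun a _ => Finset.sum_congr rfl fun i _ => ?_
      ring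
  exact .exp ((LipschitzWith.const _).add hlin.mk'.toContinuousLinearMap.lipschitz)

theorem logLipschitz_Ztil (Jc : Fin N → Fin N → ℝ) : LogLipschitz (Ztil N K β h t q Jc) :=
  .sum Finset.univ_nonempty (logLipschitz_bFac Jc)

theorem log_Ztil (Jc : Fin N → Fin N → ℝ) (Js : Fin K → Fin N → ℝ) :
    Real.log (Ztil N K β h t q Jc Js) =
      cgf (fun σ => Real.log (bFac N K β h t q Jc Js σ)) .count 1 := by
  simp [cgf, mgf, Ztil, bFac]

theorem gibbs_eq_integral_tilted (A : (Fin N → Bool) → ℝ) (Jc : Fin N → Fin N → ℝ)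
    (Js : Fin K → Fin N → ℝ) :
    gibbs N K β h t q A Jc Js =
      ∫ σ, A σ ∂Measure.count.tilted fun σ => Real.log (bFac N K β h t q Jc Js σ) := by
  simp only [gibbs, integral_tilted, Ztil, bFac, Real.log_exp, integral_count, smul_eq_mul,
    Finset.sum_div]
  exact Finset.sum_congr rfl fun σ _ => by ring

theorem sum_coupling_update {i j : Fin N} (hij : i < j) (Jc : Fin N → Fin N → ℝ) (s : Fin N → ℝ)
    (u : ℝ) :
    ∑ k, ∑ l, (if k < l then
        Function.update Jc i (Function.update (Jc i) j u) k l * s k * s l else 0) =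
      (∑ k, ∑ l, if k < l then Jc k l * s k * s l else 0) + (u - Jc i j) * (s i * s j) := by
  rw [← sub_eq_iff_eq_add', ← Finset.sum_sub_distrib, Finset.sum_eq_single i,
    ← Finset.sum_sub_distrib, Finset.sum_eq_single j]
  · simp only [hij, if_true, Function.update_self]
    ring
  · intro l _ hl
    simp [hl]
  · simp
  · intro k _ hk
    simp [hk]
  · simp

theorem hasDerivAt_log_bFac_coupling {i j : Fin N} (hij : i < j) (Jc : Fin N → Fin N → ℝ)
    (Js : Fin K → Fin N → ℝ) (σ : Fin N → Bool) (u : ℝ) :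
    HasDerivAt (fun v => Real.log (bFac N K β h t q
        (Function.update Jc i (Function.update (Jc i) j v)) Js σ))
      (β * Real.sqrt (t / N) * (spin (σ i) * spin (σ j))) u := by
  simp only [bFac, Real.log_exp, sum_coupling_update hij Jc fun k => spin (σ k)]
  refine (((((((hasDerivAt_id u).sub_const (Jc i j)).mul_const
    (spin (σ i) * spin (σ j))).const_add _).const_mul (β * Real.sqrt (t / N))).add_const
      _).add_const _).congr_deriv ?_
  rw [one_mul]

end Coupling

section Recursion

variable {N K : ℕ} {β h t : ℝ} {q m : ℕ → ℝ}

/-- The row `J^{K-n}` of fields integrated out in passing from `Z_{K-n}` to `Z_{K-n-1}`. -/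
def fieldRow {n : ℕ} (hn : n < K) : Fin K := ⟨K - 1 - n, by omega⟩

theorem Wrec_succ {n : ℕ} (hn : n < K) (Jc : Fin N → Fin N → ℝ) (Js : Fin K → Fin N → ℝ) :
    Wrec N K β h t q m (n + 1) Jc Js =
      (∫ g, Wrec N K β h t q m n Jc (Function.update Js (fieldRow hn) g) ^ m (K - n)
        ∂gaussN N) ^ (m (K - n))⁻¹ := by
  simp [Wrec, hn, fieldRow]

theorem logLipschitz_Wrec (n : ℕ) (Jc : Fin N → Fin N → ℝ) :
    LogLipschitz (Wrec N K β h t q m n Jc) := by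
  induction n with
  | zero => exact logLipschitz_Ztil Jc
  | succ n ih =>
    by_cases hn : n < K
    · rw [funext (Wrec_succ hn Jc)]
      exact (LogLipschitz.integral ((ih.comp (lipschitzWith_update (fieldRow hn))).rpow _)
        (integrable_exp_mul_norm_gaussN N)).rpow _
    · simpa [Wrec, hn] using ih

theorem Wrec_pos (n : ℕ) (Jc : Fin N → Fin N → ℝ) (Js : Fin K → Fin N → ℝ) :
    0 < Wrec N K β h t q m n Jc Js :=
  (logLipschitz_Wrec n Jc).1 Js

theorem logLipschitz_Wrec_update (n : ℕ) (Jc : Fin N → Fin N → ℝ) (Js : Fin K → Fin N → ℝ)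
    (a : Fin K) :
    LogLipschitz fun g => Wrec N K β h t q m n Jc (Function.update Js a g) :=
  ((logLipschitz_Wrec n Jc).comp (lipschitzWith_update a)).comp (LipschitzWith.prodMk_left Js)

theorem exp_mul_log_Wrec (n : ℕ) (Jc : Fin N → Fin N → ℝ) (Js : Fin K → Fin N → ℝ) (p : ℝ) :
    Real.exp (p * Real.log (Wrec N K β h t q m n Jc Js)) = Wrec N K β h t q m n Jc Js ^ p := by
  rw [Real.rpow_def_of_pos (Wrec_pos n Jc Js), mul_comm]

theorem integrable_exp_mul_log_Wrec_update (n : ℕ) (Jc : Fin N → Fin N → ℝ)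
    (Js : Fin K → Fin N → ℝ) (a : Fin K) (p : ℝ) :
    Integrable (fun g => Real.exp
      (p * Real.log (Wrec N K β h t q m n Jc (Function.update Js a g)))) (gaussN N) := by
  simp only [exp_mul_log_Wrec]
  exact ((logLipschitz_Wrec_update n Jc Js a).rpow p).integrable (integrable_exp_mul_norm_gaussN N)

theorem log_Wrec_succ {n : ℕ} (hn : n < K) (Jc : Fin N → Fin N → ℝ) (Js : Fin K → Fin N → ℝ) :
    Real.log (Wrec N K β h t q m (n + 1) Jc Js) =
      (m (K - n))⁻¹ * cgf (fun g => Real.log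
        (Wrec N K β h t q m n Jc (Function.update Js (fieldRow hn) g))) (gaussN N) (m (K - n)) := by
  have hpos := mgf_pos (integrable_exp_mul_log_Wrec_update (β := β) (h := h) (t := t) (q := q)
    (m := m) n Jc Js (fieldRow hn) (m (K - n)))
  simp only [mgf, exp_mul_log_Wrec] at hpos
  simp only [Wrec_succ hn, cgf, mgf, exp_mul_log_Wrec, Real.log_rpow hpos]

theorem fWeight_eq_exp {a : ℕ} (Jc : Fin N → Fin N → ℝ) (Js : Fin K → Fin N → ℝ) :
    fWeight N K β h t q m a Jc Js = Real.exp (m a *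
      (Real.log (Wrec N K β h t q m (K - a) Jc Js) -
        Real.log (Wrec N K β h t q m (K - (a - 1)) Jc Js))) := by
  rw [mul_sub, Real.exp_sub, exp_mul_log_Wrec, exp_mul_log_Wrec]
  rfl

theorem fWeight_update {n : ℕ} (hn : n < K) (hm : m (K - n) ≠ 0)
    (Jc : Fin N → Fin N → ℝ) (Js : Fin K → Fin N → ℝ) (g : Fin N → ℝ) :
    fWeight N K β h t q m (K - n) Jc (Function.update Js (fieldRow hn) g) =
      Wrec N K β h t q m n Jc (Function.update Js (fieldRow hn) g) ^ m (K - n) /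
        ∫ g', Wrec N K β h t q m n Jc (Function.update Js (fieldRow hn) g') ^ m (K - n)
          ∂gaussN N := by
  have hK : K - (K - n) = n := by omega
  have hK' : K - (K - n - 1) = n + 1 := by omega
  have hint : 0 ≤ ∫ g', Wrec N K β h t q m n Jc (Function.update Js (fieldRow hn) g') ^ m (K - n)
      ∂gaussN N := integral_nonneg fun g' => Real.rpow_nonneg (Wrec_pos ..).le _
  simp only [fWeight, Zrec, hK, hK', Wrec_succ hn, Function.update_idem, Real.rpow_inv_rpow hint hm]

theorem omT1_succ {n : ℕ} (hn : n < K) (hm : m (K - n) ≠ 0) (A : (Fin N → Bool) → ℝ)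
    (Jc : Fin N → Fin N → ℝ) (Js : Fin K → Fin N → ℝ) :
    omT1 N K β h t q m A (n + 1) Jc Js =
      ∫ g, omT1 N K β h t q m A n Jc (Function.update Js (fieldRow hn) g)
        ∂(gaussN N).tilted fun g => m (K - n) *
          Real.log (Wrec N K β h t q m n Jc (Function.update Js (fieldRow hn) g)) := by
  simp only [integral_tilted, exp_mul_log_Wrec, ← fWeight_update hn hm, smul_eq_mul]
  simp [omT1, hn, fieldRow]

theorem abs_omT1_le {n : ℕ} (hn : n ≤ K) (hm : ∀ b, K - n < b → b ≤ K → m b ≠ 0)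
    {A : (Fin N → Bool) → ℝ} {C : ℝ} (hA : ∀ σ, |A σ| ≤ C)
    (Jc : Fin N → Fin N → ℝ) (Js : Fin K → Fin N → ℝ) :
    |omT1 N K β h t q m A n Jc Js| ≤ C := by
  induction n generalizing Js with
  | zero =>
    change |gibbs N K β h t q A Jc Js| ≤ C
    rw [gibbs_eq_integral_tilted]
    exact abs_integral_tilted_le .of_finite hA
  | succ n ih =>
    rw [omT1_succ hn (hm _ (by omega) (by omega))]
    exact abs_integral_tilted_le (integrable_exp_mul_log_Wrec_update ..)
      fun g => ih (by omega) (fun b hb => hm b (by omega)) _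

theorem hasDerivAt_log_Wrec {n : ℕ} (hn : n ≤ K) (hm : ∀ b, K - n < b → b ≤ K → m b ≠ 0)
    {J : ℝ → Fin N → Fin N → ℝ} {A : (Fin N → Bool) → ℝ} {c : ℝ}
    (hJ : ∀ u (Js : Fin K → Fin N → ℝ) σ,
      HasDerivAt (fun v => Real.log (bFac N K β h t q (J v) Js σ)) (c * A σ) u)
    (u : ℝ) (Js : Fin K → Fin N → ℝ) :
    HasDerivAt (fun v => Real.log (Wrec N K β h t q m n (J v) Js))
      (c * omT1 N K β h t q m A n (J u) Js) u := by
  obtain ⟨C, hC⟩ : ∃ C, ∀ σ, |A σ| ≤ C :=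
    (Set.finite_range fun σ => |A σ|).bddAbove.imp fun C hC σ => hC (Set.mem_range_self σ)
  induction n generalizing u Js with
  | zero =>
    change HasDerivAt (fun v => Real.log (Ztil N K β h t q (J v) Js))
      (c * gibbs N K β h t q A (J u) Js) u
    simp only [log_Ztil, gibbs_eq_integral_tilted]
    have hcgf := hasDerivAt_cgf_of_abs_deriv_le (μ := Measure.count) (p := 1) (L := |c| * C)
      (u := u) (fun _ => Integrable.of_finite.aestronglyMeasurable) .of_finite
      (fun v σ => hJ v Js σ) fun _ σ => by rw [abs_mul]; gcongr; exact hC σ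
    simpa only [one_mul, integral_const_mul] using hcgf
  | succ n ih =>
    have hm_n : ∀ b, K - n < b → b ≤ K → m b ≠ 0 := fun b hb => hm b (by omega)
    have hmn : m (K - n) ≠ 0 := hm _ (by omega) (by omega)
    have hcgf := hasDerivAt_cgf_of_abs_deriv_le (μ := gaussN N) (p := m (K - n)) (L := |c| * C)
      (u := u)
      (fun v => (logLipschitz_Wrec_update n (J v) Js
        (fieldRow hn)).continuous_log.aestronglyMeasurable)
      (integrable_exp_mul_log_Wrec_update ..)
      (fun v g => ih (by omega) hm_n v (Function.update Js (fieldRow hn) g))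
      fun _ g => by
        rw [abs_mul]
        gcongr
        exact abs_omT1_le (by omega) hm_n hC ..
    simp only [log_Wrec_succ hn, omT1_succ hn hmn]
    refine (hcgf.const_mul (m (K - n))⁻¹).congr_deriv ?_
    rw [integral_const_mul, inv_mul_cancel_left₀ hmn]

theorem hasDerivAt_fWeight {a : ℕ} (haK : a ≤ K) (hm : ∀ b, a ≤ b → b ≤ K → m b ≠ 0)
    {J : ℝ → Fin N → Fin N → ℝ} {A : (Fin N → Bool) → ℝ} {c : ℝ}
    (hJ : ∀ u (Js : Fin K → Fin N → ℝ) σ,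
      HasDerivAt (fun v => Real.log (bFac N K β h t q (J v) Js σ)) (c * A σ) u)
    (u : ℝ) (Js : Fin K → Fin N → ℝ) :
    HasDerivAt (fun v => fWeight N K β h t q m a (J v) Js)
      (c * m a * fWeight N K β h t q m a (J u) Js *
        (omT1 N K β h t q m A (K - a) (J u) Js - omT1 N K β h t q m A (K - (a - 1)) (J u) Js))
      u := by
  have hZ := hasDerivAt_log_Wrec (m := m) (n := K - a) (by omega)
    (fun b hb => hm b (by omega)) hJ u Js
  have hZ' := hasDerivAt_log_Wrec (m := m) (n := K - (a - 1)) (by omega)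
    (fun b hb => hm b (by omega)) hJ u Js
  simp only [fWeight_eq_exp]
  refine ((hZ.sub hZ').const_mul (m a)).exp.congr_deriv ?_
  simp only [Pi.sub_apply]
  ring

end Recursion

theorem fWeight_coupling_deriv_general {N K : ℕ} {q m : ℕ → ℝ}
    (_hq : ∀ b, b < K → q b ≤ q (b + 1)) (β h : ℝ) {t : ℝ} (_ht : t ∈ Set.Icc (0 : ℝ) 1)
    {a : ℕ} (_ha1 : 1 ≤ a) (haK : a ≤ K) (hm : ∀ b, a ≤ b → b ≤ K → m b ≠ 0)
    {i j : Fin N} (hij : i < j) (Jc : Fin N → Fin N → ℝ) (Js : Fin K → Fin N → ℝ) :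
    HasDerivAt
      (fun u => fWeight N K β h t q m a
        (Function.update Jc i (Function.update (Jc i) j u)) Js)
      (β * Real.sqrt (t / N) * m a * fWeight N K β h t q m a Jc Js *
        (omT1 N K β h t q m (fun σ => spin (σ i) * spin (σ j)) (K - a) Jc Js
          - omT1 N K β h t q m (fun σ => spin (σ i) * spin (σ j)) (K - (a - 1)) Jc Js))
      (Jc i j) := by
  simpa only [Function.update_eq_self] using
    hasDerivAt_fWeight haK hm
      (fun u Js σ => hasDerivAt_log_bFac_coupling (β := β) (h := h) (q := q) hij Jc Js σ u)
      (Jc i j) Js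

/-- for every level `a ∈ {1, …, K}` (with `m_a > 0`) and sites `i < j`,
for each fixed realization of the disorder,
`∂_{J_{ij}} f_a = β √(t/N) m_a f_a (ω̃_a(σ_i σ_j) − ω̃_{a−1}(σ_i σ_j))`,
where `ω̃_b = omT1 … (K − b)` are the partially averaged Gibbs states. -/
theorem fWeight_coupling_deriv (N : ℕ) (hN : 1 ≤ N) (X : OrderParam)
    (hm : ∀ b, 1 ≤ b → b ≤ X.K → 0 < X.m b) (β h t : ℝ) (hβ : 0 ≤ β)
    (ht : t ∈ Set.Ioo (0 : ℝ) 1) (a : ℕ) (ha1 : 1 ≤ a) (haK : a ≤ X.K)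
    (i j : Fin N) (hij : i < j)
    (Jc : Fin N → Fin N → ℝ) (Js : Fin X.K → Fin N → ℝ) :
    HasDerivAt
      (fun u => fWeight N X.K β h t X.q X.m a
        (Function.update Jc i (Function.update (Jc i) j u)) Js)
      (β * Real.sqrt (t / N) * X.m a * fWeight N X.K β h t X.q X.m a Jc Js *
        (omT1 N X.K β h t X.q X.m (fun σ => spin (σ i) * spin (σ j)) (X.K - a) Jc Js
          - omT1 N X.K β h t X.q X.m (fun σ => spin (σ i) * spin (σ j)) (X.K - (a - 1)) Jc Js))
      (Jc i j) := by
  exact fWeight_coupling_deriv_general X.hq_mono β h (Set.Ioo_subset_Icc_self ht) ha1 haK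
    (fun b hab hbK => (hm b (ha1.trans hab) hbK).ne') hij Jc Js

end
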